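/- Let n ≥ 2 and let c be a nonzero real number, and set R(x) := W_n(x) − c·W_{n−1}(x), where W_k(x) := U_k(x) + U_{k−1}(x). Then: (i) all n complex zeros of R are real and simple, and at most one of them lies outside the open interval (−1, 1); (ii) if −1 < c < (2n+1)/(2n−1), then all zeros of R lie in (−1, 1); (iii) if c < −1, then the smallest zero of R is less than −1; (iv) if c > (2n+1)/(2n−1), then the largest zero of R is greater than 1. -/

import Mathlib

open Polynomial

/-!
All members of the pencil `W_n - c W_{n-1}` take the values of `W_n` at the `n - 1` zeros of
`W_{n-1}`, which lie in `(-1, 1)`. Since `W_k(cos 2φ) sin φ = sin ((2k + 1) φ)`, these values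
alternate in sign, so together with the signs at `±∞` they force `n` real zeros interlacing the
zeros of `W_{n-1}`. Only the extreme zeros can thus leave `(-1, 1)`, and the sign of the polynomial
at an endpoint decides on which side of it the extreme zero lies. The values at `-1` and `1` are
`(-1)^n (1 + c)` and `2n + 1 - c (2n - 1)`; they cannot both put a zero outside, as `-1` is
smaller than `(2n + 1) / (2n - 1)`.
-/

theorem ncard_notMem_Ioo_le_one {α : Type*} [Preorder α] {m : ℕ} {x : Fin (m + 1) → α} {a b : α}
    (ha : ∀ i : Fin m, a < x i.succ) (hb : ∀ i : Fin m, x i.castSucc < b)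
    (h : a < x 0 ∨ x (Fin.last m) < b) : {i | x i ∉ Set.Ioo a b}.ncard ≤ 1 := by
  suffices ∃ j, ∀ i ≠ j, x i ∈ Set.Ioo a b by
    obtain ⟨j, hj⟩ := this
    refine (Set.ncard_le_ncard fun i hi ↦ ?_).trans (Set.ncard_singleton j).le
    exact of_not_not fun hij ↦ hi (hj i hij)
  rcases h with h | h
  · refine ⟨Fin.last m, fun i hi ↦ ⟨Fin.cases h ha i, ?_⟩⟩
    obtain ⟨j, rfl⟩ := Fin.exists_castSucc_eq.2 hi
    exact hb j
  · refine ⟨0, fun i hi ↦ ⟨?_, Fin.lastCases h hb i⟩⟩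
    obtain ⟨j, rfl⟩ := Fin.exists_succ_eq.2 hi
    exact ha j

section OrderedRing

variable {K : Type*} [CommRing K] [LinearOrder K] [IsStrictOrderedRing K]

theorem two_mul_natCast_succ_sub_one_pos (m : ℕ) : 0 < 2 * ((m + 1 : ℕ) : K) - 1 := by
  push_cast
  linarith [m.cast_nonneg (α := K)]

theorem cmp_eq_cmp_of_sub_eq_pos_mul_sub {k a b c d : K} (hk : 0 < k)
    (h : c - d = k * (a - b)) : cmp a b = cmp c d := by
  rw [← cmp_sub_zero a b, ← cmp_sub_zero c d, h, ← cmp_mul_pos_left hk, mul_zero]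

theorem cmp_apply_last_eq_cmp_eval_of_forall_castSucc_lt {m : ℕ} {P : K[X]} {l b : K}
    {x : Fin (m + 1) → K} (hl : 0 < l) (hP : P = C l * ∏ i, (X - C (x i)))
    (hb : ∀ i : Fin m, x i.castSucc < b) : cmp (x (Fin.last m)) b = cmp 0 (P.eval b) := by
  have hpos : 0 < l * ∏ i : Fin m, (b - x i.castSucc) :=
    mul_pos hl (Finset.prod_pos fun i _ ↦ sub_pos.2 (hb i))
  refine cmp_eq_cmp_of_sub_eq_pos_mul_sub hpos ?_
  simp only [hP, eval_mul, eval_C, eval_prod, eval_sub, eval_X, Fin.prod_univ_castSucc]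
  ring

theorem cmp_apply_zero_eq_cmp_eval_of_forall_lt_succ {m : ℕ} {P : K[X]} {l a : K}
    {x : Fin (m + 1) → K} (hl : 0 < l) (hP : P = C l * ∏ i, (X - C (x i)))
    (ha : ∀ i : Fin m, a < x i.succ) : cmp (x 0) a = cmp ((-1) ^ (m + 1) * P.eval a) 0 := by
  have hpos : 0 < l * ∏ i : Fin m, (x i.succ - a) :=
    mul_pos hl (Finset.prod_pos fun i _ ↦ sub_pos.2 (ha i))
  have heval : (-1) ^ (m + 1) * P.eval a = l * ∏ i, (x i - a) := by
    have hneg : ∏ i, (x i - a) = (-1) ^ (m + 1) * ∏ i, (a - x i) := by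
      simp only [← neg_sub a, Finset.prod_neg, Finset.card_univ, Fintype.card_fin]
    simp only [hP, hneg, eval_mul, eval_C, eval_prod, eval_sub, eval_X]
    ring
  refine cmp_eq_cmp_of_sub_eq_pos_mul_sub hpos ?_
  rw [heval, Fin.prod_univ_succ]
  ring

end OrderedRing

theorem eq_C_leadingCoeff_mul_prod_of_injective {R ι : Type*} [CommRing R] [IsDomain R] [Fintype ι]
    {P : R[X]} {x : ι → R} (hx : Function.Injective x) (hP : P.natDegree ≤ Fintype.card ι)
    (hroot : ∀ i, P.IsRoot (x i)) : P = C P.leadingCoeff * ∏ i, (X - C (x i)) := by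
  rcases eq_or_ne P 0 with rfl | hP0
  · simp
  have hroots : P.roots = (Finset.univ.map ⟨x, hx⟩).val :=
    roots_eq_of_natDegree_le_card_of_ne_zero (by simpa using hroot) (by simpa using hP) hP0
  have hcard : P.roots.card = P.natDegree :=
    le_antisymm P.card_roots' (by simpa [hroots] using hP)
  have hprod := C_leadingCoeff_mul_prod_multiset_X_sub_C hcard
  rw [hroots, Finset.map_val, Multiset.map_map] at hprod
  exact hprod.symm

section Real

open Filter

variable {P : ℝ[X]}

theorem exists_mem_Ioo_isRoot_of_eval_mul_eval_neg {a b : ℝ} (hab : a < b)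
    (h : P.eval a * P.eval b < 0) : ∃ z ∈ Set.Ioo a b, P.IsRoot z := by
  rcases mul_neg_iff.1 h with ⟨ha, hb⟩ | ⟨ha, hb⟩
  · exact intermediate_value_Ioo' hab.le P.continuousOn ⟨hb, ha⟩
  · exact intermediate_value_Ioo hab.le P.continuousOn ⟨ha, hb⟩

theorem eventually_atTop_eval_pos (hP : 0 < P.leadingCoeff) : ∀ᶠ x in atTop, 0 < P.eval x := by
  refine P.isEquivalent_atTop_lead.eventually_pos ?_
  filter_upwards [eventually_gt_atTop 0] with x hx
  positivity

theorem eventually_atBot_neg_one_pow_mul_eval_pos (hP : 0 < P.leadingCoeff) :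
    ∀ᶠ x in atBot, 0 < (-1) ^ P.natDegree * P.eval x := by
  refine (Asymptotics.IsEquivalent.refl.mul P.isEquivalent_atBot_lead).eventually_pos ?_
  filter_upwards [eventually_lt_atBot 0] with x hx
  have hx' : 0 < -x := neg_pos.2 hx
  calc 0 < P.leadingCoeff * (-x) ^ P.natDegree := by positivity
    _ = (-1) ^ P.natDegree * (P.leadingCoeff * x ^ P.natDegree) := by rw [neg_pow]; ring

theorem exists_strictMono_roots_of_alternating {n : ℕ} (hP : P.natDegree ≤ n)
    {t : Fin (n + 1) → ℝ} (ht : StrictMono t)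
    (hsign : ∀ i, 0 < (-1) ^ (i.rev : ℕ) * P.eval (t i)) :
    ∃ x : Fin n → ℝ, StrictMono x ∧ P = C P.leadingCoeff * ∏ i, (X - C (x i)) ∧
      ∀ i, x i ∈ Set.Ioo (t i.castSucc) (t i.succ) := by
  have hroot (i : Fin n) : ∃ z ∈ Set.Ioo (t i.castSucc) (t i.succ), P.IsRoot z := by
    refine exists_mem_Ioo_isRoot_of_eval_mul_eval_neg (ht i.castSucc_lt_succ) ?_
    have hleft := hsign i.castSucc
    have hright := hsign i.succ
    rw [Fin.rev_castSucc, Fin.val_succ, pow_succ] at hleft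
    rw [Fin.rev_succ, Fin.val_castSucc] at hright
    rcases neg_one_pow_eq_or ℝ (i.rev : ℕ) with h | h <;> rw [h] at hleft hright <;> nlinarith
  choose x hx hPx using hroot
  have hmono : StrictMono x := fun i j hij ↦
    calc x i < t i.succ := (hx i).2
      _ ≤ t j.castSucc := ht.monotone (Fin.succ_le_castSucc_iff.2 hij)
      _ < x j := (hx j).1
  exact ⟨x, hmono, eq_C_leadingCoeff_mul_prod_of_injective hmono.injective (by simpa using hP) hPx,
    hx⟩

theorem exists_strictMono_roots_interlacing {m : ℕ} (hdeg : P.natDegree = m + 1)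
    (hlead : 0 < P.leadingCoeff) {y : Fin m → ℝ} (hy : StrictMono y)
    (hsign : ∀ i, 0 < (-1) ^ (i.rev + 1 : ℕ) * P.eval (y i)) :
    ∃ x : Fin (m + 1) → ℝ, StrictMono x ∧ P = C P.leadingCoeff * ∏ i, (X - C (x i)) ∧
      (∀ i, x i.castSucc < y i) ∧ ∀ i, y i < x i.succ := by
  obtain ⟨b, hyb, hb⟩ : ∃ b, (∀ i, y i < b) ∧ 0 < P.eval b :=
    ((eventually_all.2 fun i ↦ eventually_gt_atTop (y i)).and
      (eventually_atTop_eval_pos hlead)).exists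
  obtain ⟨a, ⟨hay, hab⟩, ha⟩ :
      ∃ a, ((∀ i, a < y i) ∧ a < b) ∧ 0 < (-1) ^ P.natDegree * P.eval a :=
    (((eventually_all.2 fun i ↦ eventually_lt_atBot (y i)).and (eventually_lt_atBot b)).and
      (eventually_atBot_neg_one_pow_mul_eval_pos hlead)).exists
  let t : Fin (m + 2) → ℝ := Fin.cons a (Fin.snoc y b : Fin (m + 1) → ℝ)
  have ht : StrictMono t := by
    have hsnoc : StrictMono (Fin.snoc y b : Fin (m + 1) → ℝ) := by
      rw [← Fin.insertNth_last', Fin.strictMono_insertNth_iff]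
      exact ⟨hy, fun i _ ↦ hyb i, fun i hi ↦ absurd hi i.castSucc_lt_last.not_ge⟩
    refine Fin.strictMono_cons.2 ⟨Fin.lastCases ?_ fun i ↦ ?_, hsnoc⟩
    · rwa [Fin.snoc_last]
    · rw [Fin.snoc_castSucc]
      exact hay i
  have htsign (i) : 0 < (-1) ^ (i.rev : ℕ) * P.eval (t i) := by
    cases i using Fin.cases with
    | zero => simpa [t, hdeg] using ha
    | succ i =>
      cases i using Fin.lastCases with
      | last => simpa [t] using hb
      | cast i => simpa [t, Fin.rev_succ, Fin.rev_castSucc] using hsign i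
  obtain ⟨x, hx, hPx, hxt⟩ := exists_strictMono_roots_of_alternating hdeg.le ht htsign
  refine ⟨x, hx, hPx, fun i ↦ ?_, fun i ↦ ?_⟩
  · simpa [t] using (hxt i.castSucc).2
  · simpa [t, ← Fin.succ_castSucc] using (hxt i.succ).1

end Real

/-- The Chebyshev polynomials of the fourth kind, indexed by `ℤ` like `Polynomial.Chebyshev.U`. -/
noncomputable def chebyshevW (R : Type*) [CommRing R] (k : ℤ) : R[X] :=
  Chebyshev.U R k + Chebyshev.U R (k - 1)

namespace chebyshevW

section CommRing

variable (R : Type*) [CommRing R]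

theorem add_two (k : ℤ) :
    chebyshevW R (k + 2) = 2 * X * chebyshevW R (k + 1) - chebyshevW R k := by
  have h := Chebyshev.U_add_two R (k - 1)
  rw [show k - 1 + 2 = k + 1 by ring, sub_add_cancel] at h
  simp only [chebyshevW, show k + 2 - 1 = k + 1 by ring, add_sub_cancel_right]
  linear_combination Chebyshev.U_add_two R k + h

theorem eval_one (k : ℤ) : (chebyshevW R k).eval 1 = 2 * k + 1 := by
  simp only [chebyshevW, eval_add, Chebyshev.U_eval_one]
  push_cast
  ring

theorem eval_neg_one (k : ℤ) : (chebyshevW R k).eval (-1) = k.negOnePow := by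
  simp only [chebyshevW, eval_add, Chebyshev.U_eval_neg_one, Int.negOnePow_sub, Int.negOnePow_one]
  push_cast
  ring

variable [IsDomain R] [NeZero (2 : R)]

theorem degree_U_sub_one_lt (n : ℕ) :
    (Chebyshev.U R ((n : ℤ) - 1)).degree < (Chebyshev.U R n).degree := by
  cases n with
  | zero => simp
  | succ n =>
    rw [Nat.cast_succ, add_sub_cancel_right, ← Nat.cast_succ, Chebyshev.degree_U_natCast,
      Chebyshev.degree_U_natCast]
    exact_mod_cast n.lt_succ_self

theorem degree_natCast (n : ℕ) : (chebyshevW R n).degree = n := by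
  rw [chebyshevW, degree_add_eq_left_of_degree_lt (degree_U_sub_one_lt R n),
    Chebyshev.degree_U_natCast]

theorem leadingCoeff_natCast (n : ℕ) : (chebyshevW R n).leadingCoeff = 2 ^ n := by
  rw [chebyshevW, leadingCoeff_add_of_degree_lt' (degree_U_sub_one_lt R n),
    Chebyshev.leadingCoeff_U_natCast]

end CommRing

theorem eval_cos_two_mul_mul_sin (k : ℤ) (φ : ℝ) :
    (chebyshevW ℝ k).eval (Real.cos (2 * φ)) * Real.sin φ = Real.sin ((2 * k + 1) * φ) := by
  have sin_rec (a : ℝ) :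
      Real.sin ((2 * (a + 2) + 1) * φ) =
        2 * Real.cos (2 * φ) * Real.sin ((2 * (a + 1) + 1) * φ) - Real.sin ((2 * a + 1) * φ) := by
    rw [show (2 * (a + 2) + 1) * φ = (2 * (a + 1) + 1) * φ + 2 * φ by ring,
      show (2 * a + 1) * φ = (2 * (a + 1) + 1) * φ - 2 * φ by ring, Real.sin_add, Real.sin_sub]
    ring
  have eval_rec (k : ℤ) := congrArg (eval (Real.cos (2 * φ))) (add_two ℝ k)
  simp only [eval_sub, eval_mul, eval_ofNat, eval_X] at eval_rec
  induction k using Chebyshev.induct with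
  | zero => simp [chebyshevW]
  | one =>
    have h := sin_rec (-1)
    norm_num [chebyshevW] at h ⊢
    linarith
  | add_two n ih₁ ih₀ =>
    rw [eval_rec]
    push_cast at ih₁ ih₀ ⊢
    rw [sin_rec]
    linear_combination 2 * Real.cos (2 * φ) * ih₁ - ih₀
  | neg_add_one n ih₀ ih₁ =>
    have h := eval_rec (-n - 1)
    rw [show (-n - 1 + 2 : ℤ) = -n + 1 by ring, show (-n - 1 + 1 : ℤ) = -n by ring] at h
    have h' := sin_rec (-n - 1)
    rw [show (-n - 1 + 2 : ℝ) = -n + 1 by ring, show (-n - 1 + 1 : ℝ) = -n by ring] at h'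
    push_cast at ih₀ ih₁ ⊢
    linear_combination 2 * Real.cos (2 * φ) * ih₀ - ih₁ + Real.sin φ * h - h'

/-- The angles `φ ∈ (0, π / 2)` for which `cos (2 * φ)` is a zero of `W_m`, in decreasing order. -/
noncomputable def angle {m : ℕ} (i : Fin m) : ℝ :=
  ((i.rev : ℕ) + 1) * Real.pi / (2 * m + 1)

/-- The zeros of `W_m`, in increasing order. -/
noncomputable def zeros (m : ℕ) (i : Fin m) : ℝ :=
  Real.cos (2 * angle i)

variable {m : ℕ}

theorem angle_mem_Ioo (i : Fin m) : angle i ∈ Set.Ioo 0 (Real.pi / 2) := by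
  have hi : ((i.rev : ℕ) : ℝ) + 1 ≤ m := mod_cast i.rev.is_lt
  refine ⟨by unfold angle; positivity, ?_⟩
  rw [angle, div_lt_iff₀ (by positivity)]
  nlinarith [Real.pi_pos]

theorem angle_strictAnti : StrictAnti (angle : Fin m → ℝ) := by
  intro i j hij
  have hrev : ((j.rev : ℕ) : ℝ) < (i.rev : ℕ) := mod_cast Fin.rev_lt_rev.2 hij
  unfold angle
  gcongr

theorem two_mul_add_one_mul_angle (i : Fin m) :
    (2 * m + 1) * angle i = ((i.rev + 1 : ℕ) : ℝ) * Real.pi := by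
  rw [angle, mul_div_cancel₀ _ (by positivity)]
  push_cast
  rfl

theorem sin_angle_pos (i : Fin m) : 0 < Real.sin (angle i) :=
  Real.sin_pos_of_pos_of_lt_pi (angle_mem_Ioo i).1 (by linarith [(angle_mem_Ioo i).2, Real.pi_pos])

theorem cos_angle_pos (i : Fin m) : 0 < Real.cos (angle i) :=
  Real.cos_pos_of_mem_Ioo ⟨by linarith [(angle_mem_Ioo i).1, Real.pi_pos], (angle_mem_Ioo i).2⟩

theorem zeros_strictMono (m : ℕ) : StrictMono (zeros m) := fun i j hij ↦
  Real.cos_lt_cos_of_nonneg_of_le_pi (by linarith [(angle_mem_Ioo j).1])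
    (by linarith [(angle_mem_Ioo i).2]) (by linarith [angle_strictAnti hij])

theorem zeros_mem_Ioo (i : Fin m) : zeros m i ∈ Set.Ioo (-1) 1 := by
  obtain ⟨h0, hpi⟩ := angle_mem_Ioo i
  constructor
  · rw [← Real.cos_pi]
    exact Real.cos_lt_cos_of_nonneg_of_le_pi (by linarith) le_rfl (by linarith)
  · rw [← Real.cos_zero]
    exact Real.cos_lt_cos_of_nonneg_of_le_pi le_rfl (by linarith) (by linarith)

theorem isRoot_zeros (i : Fin m) : (chebyshevW ℝ m).IsRoot (zeros m i) := by
  have h := eval_cos_two_mul_mul_sin m (angle i)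
  rw [Int.cast_natCast, two_mul_add_one_mul_angle, Real.sin_nat_mul_pi] at h
  exact (mul_eq_zero.1 h).resolve_right (sin_angle_pos i).ne'

theorem eval_add_one_zeros (i : Fin m) :
    (chebyshevW ℝ (m + 1)).eval (zeros m i) =
      (-1) ^ (i.rev + 1 : ℕ) * (2 * Real.cos (angle i)) := by
  refine mul_right_cancel₀ (sin_angle_pos i).ne' ?_
  have hangle : (2 * ((m + 1 : ℤ) : ℝ) + 1) * angle i =
      2 * angle i + ((i.rev + 1 : ℕ) : ℝ) * Real.pi := by
    rw [← two_mul_add_one_mul_angle]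
    push_cast
    ring
  rw [zeros, eval_cos_two_mul_mul_sin, hangle, Real.sin_add_nat_mul_pi, Real.sin_two_mul]
  ring

end chebyshevW

/-- The order-one quasi-orthogonal polynomials `W_n - c W_{n-1}` built from the Chebyshev
polynomials of the fourth kind. -/
noncomputable def quasiChebyshevW {R : Type*} [CommRing R] (c : R) (n : ℤ) : R[X] :=
  chebyshevW R n - C c * chebyshevW R (n - 1)

namespace quasiChebyshevW

section CommRing

variable {R : Type*} [CommRing R] (c : R)

theorem eval_one (n : ℤ) : (quasiChebyshevW c n).eval 1 = 2 * n + 1 - c * (2 * n - 1) := by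
  simp only [quasiChebyshevW, eval_sub, eval_mul, eval_C, chebyshevW.eval_one]
  push_cast
  ring

theorem eval_neg_one (n : ℤ) : (quasiChebyshevW c n).eval (-1) = n.negOnePow * (1 + c) := by
  simp only [quasiChebyshevW, eval_sub, eval_mul, eval_C, chebyshevW.eval_neg_one,
    Int.negOnePow_sub, Int.negOnePow_one]
  push_cast
  ring

variable [IsDomain R] [NeZero (2 : R)] (n : ℕ)

theorem degree_C_mul_chebyshevW_sub_one_lt :
    (C c * chebyshevW R ((n + 1 : ℕ) - 1 : ℤ)).degree < (chebyshevW R (n + 1 : ℕ)).degree := by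
  rw [Nat.cast_succ, add_sub_cancel_right, ← Nat.cast_succ, chebyshevW.degree_natCast,
    ← smul_eq_C_mul]
  refine (degree_smul_le c _).trans_lt ?_
  rw [chebyshevW.degree_natCast]
  exact_mod_cast n.lt_succ_self

theorem natDegree_natCast_succ : (quasiChebyshevW c (n + 1 : ℕ)).natDegree = n + 1 := by
  refine natDegree_eq_of_degree_eq_some ?_
  rw [quasiChebyshevW, degree_sub_eq_left_of_degree_lt (degree_C_mul_chebyshevW_sub_one_lt c n),
    chebyshevW.degree_natCast]

theorem leadingCoeff_natCast_succ :
    (quasiChebyshevW c (n + 1 : ℕ)).leadingCoeff = 2 ^ (n + 1) := by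
  rw [quasiChebyshevW, leadingCoeff_sub_of_degree_lt (degree_C_mul_chebyshevW_sub_one_lt c n),
    chebyshevW.leadingCoeff_natCast]

end CommRing

theorem eval_zeros_pos (c : ℝ) {m : ℕ} (i : Fin m) :
    0 < (-1) ^ (i.rev + 1 : ℕ) *
      (quasiChebyshevW c (m + 1 : ℕ)).eval (chebyshevW.zeros m i) := by
  have hroot : (chebyshevW ℝ m).eval (chebyshevW.zeros m i) = 0 := chebyshevW.isRoot_zeros i
  rw [quasiChebyshevW, Nat.cast_succ, add_sub_cancel_right, eval_sub, eval_mul, hroot, mul_zero,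
    sub_zero, chebyshevW.eval_add_one_zeros, ← mul_assoc, ← mul_pow, neg_one_mul, neg_neg, one_pow,
    one_mul]
  exact mul_pos two_pos (chebyshevW.cos_angle_pos i)

theorem exists_strictMono_roots (c : ℝ) (m : ℕ) :
    ∃ x : Fin (m + 1) → ℝ, StrictMono x ∧
      quasiChebyshevW c (m + 1 : ℕ) = C (2 ^ (m + 1)) * ∏ i, (X - C (x i)) ∧
      (∀ i, x (Fin.castSucc i) < chebyshevW.zeros m i) ∧
      ∀ i, chebyshevW.zeros m i < x (Fin.succ i) := by
  have hlead := leadingCoeff_natCast_succ c m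
  rw [← hlead]
  exact exists_strictMono_roots_interlacing (natDegree_natCast_succ c m) (by rw [hlead]; positivity)
    (chebyshevW.zeros_strictMono m) (eval_zeros_pos c)

variable {c : ℝ} {m : ℕ} {x : Fin (m + 1) → ℝ}

theorem cmp_apply_last_one
    (hR : quasiChebyshevW c (m + 1 : ℕ) = C (2 ^ (m + 1)) * ∏ i, (X - C (x i)))
    (hx : ∀ i : Fin m, x i.castSucc < 1) :
    cmp (x (Fin.last m)) 1 =
      cmp c ((2 * ((m + 1 : ℕ) : ℝ) + 1) / (2 * ((m + 1 : ℕ) : ℝ) - 1)) := by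
  have hden := two_mul_natCast_succ_sub_one_pos (K := ℝ) m
  rw [cmp_apply_last_eq_cmp_eval_of_forall_castSucc_lt (by positivity) hR hx, eval_one]
  refine (cmp_eq_cmp_of_sub_eq_pos_mul_sub hden ?_).symm
  rw [Int.cast_natCast]
  field_simp
  ring

theorem cmp_apply_zero_neg_one
    (hR : quasiChebyshevW c (m + 1 : ℕ) = C (2 ^ (m + 1)) * ∏ i, (X - C (x i)))
    (hx : ∀ i : Fin m, -1 < x i.succ) : cmp (x 0) (-1) = cmp c (-1) := by
  rw [cmp_apply_zero_eq_cmp_eval_of_forall_lt_succ (by positivity) hR hx, eval_neg_one]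
  refine (cmp_eq_cmp_of_sub_eq_pos_mul_sub one_pos ?_).symm
  have hsign : (-1 : ℝ) ^ (m + 1) * (-1) ^ (m + 1) = 1 := by rw [← mul_pow]; norm_num
  rw [← mul_assoc, Int.coe_negOnePow_natCast, Int.cast_pow, Int.cast_neg, Int.cast_one, hsign]
  ring

end quasiChebyshevW

/-- Zeros of the fourth-kind Chebyshev quasi-orthogonal polynomial
`R = W_n - c W_{n-1}` of order one (`W_k = U_k + U_{k-1}`):  all `n` complex zeros are
real and simple, at most one lies outside `(-1,1)`; if `-1 < c < (2n+1)/(2n-1)` all zeros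
lie in `(-1,1)`; if `c < -1` the smallest zero is `< -1`; if `c > (2n+1)/(2n-1)` the
largest zero is `> 1`. -/
theorem chebyshevW_quasiOrthogonal_zeros (n : ℕ) (hn : 2 ≤ n) (c : ℝ) (hc : c ≠ 0)
    (R : Polynomial ℝ)
    (hR : R = (Polynomial.Chebyshev.U ℝ n + Polynomial.Chebyshev.U ℝ ((n : ℤ) - 1))
        - C c * (Polynomial.Chebyshev.U ℝ ((n : ℤ) - 1)
            + Polynomial.Chebyshev.U ℝ ((n : ℤ) - 2))) :
    ∃ x : Fin n → ℝ, StrictMono x ∧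
      R = C ((2 : ℝ) ^ n) * ∏ i : Fin n, (X - C (x i)) ∧
      Set.ncard {i : Fin n | x i ∉ Set.Ioo (-1 : ℝ) 1} ≤ 1 ∧
      ((-1 < c ∧ c < (2 * (n : ℝ) + 1) / (2 * (n : ℝ) - 1)) →
        ∀ i, x i ∈ Set.Ioo (-1 : ℝ) 1) ∧
      (c < -1 → x ⟨0, by omega⟩ < -1) ∧
      ((2 * (n : ℝ) + 1) / (2 * (n : ℝ) - 1) < c → 1 < x ⟨n - 1, by omega⟩) := by
  obtain ⟨m, rfl⟩ : ∃ m, n = m + 1 := ⟨n - 1, by omega⟩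
  replace hR : R = quasiChebyshevW c (m + 1 : ℕ) := by
    rw [hR, quasiChebyshevW, chebyshevW, chebyshevW, sub_sub, one_add_one_eq_two]
  obtain ⟨x, hmono, hprod, hlt, hgt⟩ := quasiChebyshevW.exists_strictMono_roots c m
  have hsucc (i) : -1 < x (Fin.succ i) := (chebyshevW.zeros_mem_Ioo i).1.trans (hgt i)
  have hcastSucc (i) : x (Fin.castSucc i) < 1 := (hlt i).trans (chebyshevW.zeros_mem_Ioo i).2
  have hfirst := quasiChebyshevW.cmp_apply_zero_neg_one hprod hsucc
  have hlast := quasiChebyshevW.cmp_apply_last_one hprod hcastSucc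
  have hfirst_gt : -1 < x 0 ↔ -1 < c := lt_iff_lt_of_cmp_eq_cmp (cmp_eq_cmp_symm.1 hfirst)
  have hlast_lt := lt_iff_lt_of_cmp_eq_cmp hlast
  refine ⟨x, hmono, hR.trans hprod, ncard_notMem_Ioo_le_one hsucc hcastSucc ?_,
    fun ⟨hc₁, hc₂⟩ i ↦ ⟨?_, ?_⟩,
    (lt_iff_lt_of_cmp_eq_cmp hfirst).2, (lt_iff_lt_of_cmp_eq_cmp (cmp_eq_cmp_symm.1 hlast)).2⟩
  · rw [hfirst_gt, hlast_lt]
    have hratio : -1 < (2 * ((m + 1 : ℕ) : ℝ) + 1) / (2 * ((m + 1 : ℕ) : ℝ) - 1) :=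
      neg_one_lt_zero.trans (div_pos (by positivity) (two_mul_natCast_succ_sub_one_pos m))
    exact (lt_or_ge (-1) c).imp_right (·.trans_lt hratio)
  · exact (hfirst_gt.2 hc₁).trans_le (hmono.monotone i.zero_le)
  · exact (hmono.monotone i.le_last).trans_lt (hlast_lt.2 hc₂)
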